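/- Let 0 < q < 1, let χ be a Dirichlet character, d ≥ 1, and let s be a complex number with Re(s) > 1. Then for each ω ∈ {•,★}, L^ω_{q,d}({s}^d; {χ}^d) = Σ_{μ ⊢ d} (ε^ω_μ / z_μ) · ∏_{j=1}^{ℓ(μ)} [ Σ_{l_j=0}^{μ_j − 1} C(μ_j − 1, l_j) (1 − q)^{l_j} L_q(μ_j s − l_j; χ^{μ_j}) ], where C(·,·) is the binomial coefficient and the outer sum is over all partitions μ of d. -/

import Mathlib

open Complex Filter Finset Topology

noncomputable section

/-- `z_μ = ∏_i i^{m_i(μ)} m_i(μ)!` for a partition `μ`. -/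
def zPart {d : ℕ} (μ : Nat.Partition d) : ℕ :=
  ∏ i ∈ μ.parts.toFinset, i ^ μ.parts.count i * (μ.parts.count i).factorial

/-- The `q`-analogue Dirichlet `L`-function
`L_q(s;χ) = ∑_{m≥1} χ(m) q^{m(s-1)}/[m]_q^s`, where `[m]_q = (1-q^m)/(1-q)` and
`q^{m(s-1)} = e^{m(s-1) log q}` (complex power of the positive real `q`). -/
def qLFun {N : ℕ} (χ : DirichletCharacter ℂ N) (q : ℝ) (s : ℂ) : ℂ :=
  ∑' m : ℕ, if m = 0 then 0 else
    χ m * (q : ℂ) ^ ((m : ℂ) * (s - 1)) / (((1 - q ^ m) / (1 - q) : ℝ) : ℂ) ^ s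

/-- Truncated strict multiple `q`-`L`-sum
`∑_{0<m_1<⋯<m_d≤M} ∏_j χ(m_j) q^{m_j(s-1)}/[m_j]_q^s`. -/
def qMultLSumLt {N : ℕ} (χ : DirichletCharacter ℂ N) (d : ℕ) (q : ℝ) (s : ℂ) (M : ℕ) : ℂ :=
  ∑ m ∈ (Fintype.piFinset fun _ : Fin d => Finset.Icc 1 M).filter
      (fun m => ∀ i j : Fin d, i < j → m i < m j),
    ∏ j, χ (m j) * (q : ℂ) ^ ((m j : ℂ) * (s - 1)) /
      (((1 - q ^ (m j)) / (1 - q) : ℝ) : ℂ) ^ s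

/-- Truncated non-strict multiple `q`-`L`-sum
`∑_{0<m_1≤⋯≤m_d≤M} ∏_j χ(m_j) q^{m_j(s-1)}/[m_j]_q^s`. -/
def qMultLSumLe {N : ℕ} (χ : DirichletCharacter ℂ N) (d : ℕ) (q : ℝ) (s : ℂ) (M : ℕ) : ℂ :=
  ∑ m ∈ (Fintype.piFinset fun _ : Fin d => Finset.Icc 1 M).filter
      (fun m => ∀ i j : Fin d, i < j → m i ≤ m j),
    ∏ j, χ (m j) * (q : ℂ) ^ ((m j : ℂ) * (s - 1)) /
      (((1 - q ^ (m j)) / (1 - q) : ℝ) : ℂ) ^ s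

/-- The partition sum of formula (2.12). -/
def qEvalSum {N : ℕ} (χ : DirichletCharacter ℂ N) (d : ℕ) (q : ℝ) (s : ℂ)
    (strict : Bool) : ℂ :=
  ∑ μ : Nat.Partition d,
    ((if strict then (-1 : ℂ) ^ ((d : ℤ) - μ.parts.card) else 1) / (zPart μ : ℂ)) *
    (μ.parts.map fun p =>
      ∑ l ∈ Finset.range p,
        ((p - 1).choose l : ℂ) * (1 - (q : ℂ)) ^ l * qLFun (χ ^ p) q (p * s - l)).prod

/-!
Put `f m = χ(m) q^{m(s-1)} / [m]_q^s`. The truncated strict and non-strict sums are the elementary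
and complete homogeneous symmetric polynomials of `f 1, …, f M`, with generating functions
`∏ (1 + f m X)` and `∏ (1 - f m X)⁻¹`. The logarithmic derivatives of these products are the
generating functions of the (signed) power sums, and the same differential equation characterises
the cycle index of the symmetric group, because removing a part of a partition gives
`d Z_d = ∑_k p_k Z_{d-k}`. Finally `q^{-m} = 1 + (1 - q) [m]_q q^{-m}`, so the binomial theorem
turns `f m ^ k` into the terms of `∑_l C(k-1, l) (1-q)^l L_q(k s - l; χ^k)`.
-/

section CycleIndex

/-- The cycle index `∑_{μ ⊢ d} z_μ⁻¹ ∏_j p_{μ_j}` of the symmetric group on `d` letters, evaluated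
at a sequence `p₁, p₂, …`; the value `p 0` never enters. -/
def cycleIndex {K : Type*} [Field K] (p : ℕ → K) (d : ℕ) : K :=
  ∑ μ : Nat.Partition d, (μ.parts.map p).prod / zPart μ

theorem zPart_eq_prod {d : ℕ} (μ : Nat.Partition d) {s : Finset ℕ} (hs : μ.parts.toFinset ⊆ s) :
    zPart μ = ∏ i ∈ s, i ^ μ.parts.count i * (μ.parts.count i).factorial := by
  refine Finset.prod_subset hs fun i _ hi => ?_
  simp [Multiset.count_eq_zero.2 (mt Multiset.mem_toFinset.2 hi)]

theorem zPart_of_parts_eq_cons {m n a : ℕ} {μ : Nat.Partition m} {ν : Nat.Partition n}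
    (h : μ.parts = a ::ₘ ν.parts) : zPart μ = a * μ.parts.count a * zPart ν := by
  have ha : a ∈ μ.parts.toFinset := by simp [h]
  have hν : ν.parts.toFinset ⊆ μ.parts.toFinset := by simp [h, Finset.subset_insert]
  have hrest : ∏ i ∈ μ.parts.toFinset.erase a, i ^ μ.parts.count i * (μ.parts.count i).factorial =
      ∏ i ∈ μ.parts.toFinset.erase a, i ^ ν.parts.count i * (ν.parts.count i).factorial :=
    Finset.prod_congr rfl fun i hi => by
      rw [h, Multiset.count_cons_of_ne (Finset.ne_of_mem_erase hi)]
  rw [zPart_eq_prod μ subset_rfl, zPart_eq_prod ν hν, ← Finset.mul_prod_erase _ _ ha,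
    ← Finset.mul_prod_erase _ _ ha, hrest, h, Multiset.count_cons_self, Nat.factorial_succ,
    pow_succ]
  ring

theorem sum_range_succ_mul_count_parts {d : ℕ} (μ : Nat.Partition d) :
    ∑ i ∈ range d, (i + 1) * μ.parts.count (i + 1) = d := by
  have hsub : μ.parts.toFinset ⊆ range (d + 1) := fun i hi =>
    mem_range_succ_iff.2 (Nat.Partition.le_of_mem_parts (Multiset.mem_toFinset.1 hi))
  have hsum := Finset.sum_multiset_count_of_subset μ.parts _ hsub
  rw [μ.parts_sum, sum_range_succ'] at hsum
  simpa [mul_comm] using hsum.symm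

variable {K : Type*} [Field K]

theorem cycleIndex_zero (p : ℕ → K) : cycleIndex p 0 = 1 := by
  simp [cycleIndex, zPart]

theorem tendsto_cycleIndex [TopologicalSpace K] [IsTopologicalSemiring K] {α : Type*}
    {l : Filter α} {p : α → ℕ → K} {P : ℕ → K} (h : ∀ k, 0 < k → Tendsto (p · k) l (𝓝 (P k)))
    (d : ℕ) : Tendsto (fun a => cycleIndex (p a) d) l (𝓝 (cycleIndex P d)) :=
  tendsto_finsetSum _ fun μ _ =>
    (tendsto_multiset_prod _ fun k hk => h k (μ.parts_pos hk)).div_const _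

theorem cycleIndex_neg_one_pow_mul (p : ℕ → K) (d : ℕ) :
    cycleIndex (fun k => (-1) ^ (k + 1) * p k) d =
      ∑ μ : Nat.Partition d,
        (-1 : K) ^ ((d : ℤ) - μ.parts.card) / zPart μ * (μ.parts.map p).prod := by
  have hsign (m : Multiset ℕ) :
      (m.map fun k => (-1 : K) ^ (k + 1)).prod = (-1) ^ ((m.sum : ℤ) - m.card) := by
    induction m using Multiset.induction_on with
    | empty => simp
    | cons a m ih =>
      have hne : (-1 : K) ≠ 0 := neg_ne_zero.2 one_ne_zero
      have hexp : ((a ::ₘ m).sum : ℤ) - (a ::ₘ m).card = (a - 1) + (m.sum - m.card) := by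
        rw [Multiset.sum_cons, Multiset.card_cons]
        push_cast
        ring
      rw [Multiset.map_cons, Multiset.prod_cons, ih, hexp, zpow_add₀ hne, zpow_sub_one₀ hne,
        zpow_natCast, inv_neg_one, pow_succ]
  refine Finset.sum_congr rfl fun μ _ => ?_
  rw [Multiset.prod_map_mul, hsign, μ.parts_sum, div_mul_eq_mul_div]

variable [CharZero K]

/-- Removing one part `a` is a bijection onto the partitions of `d - a` and divides `z_μ` by `a`
times the multiplicity of `a` in `μ`. -/
theorem sum_mul_count_mul_eq_mul_cycleIndex (p : ℕ → K) {a d : ℕ} (ha : 1 ≤ a) (had : a ≤ d) :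
    ∑ μ : Nat.Partition d, (a * μ.parts.count a : ℕ) * ((μ.parts.map p).prod / zPart μ) =
      p a * cycleIndex p (d - a) := by
  let remove := Nat.Partition.partitionWithPartEquiv ha had
  have hterm (μ : {μ : Nat.Partition d // a ∈ μ.parts}) :
      (a * μ.1.parts.count a : ℕ) * ((μ.1.parts.map p).prod / zPart μ.1) =
        p a * (((remove μ).parts.map p).prod / zPart (remove μ)) := by
    have hcons : μ.1.parts = a ::ₘ (remove μ).parts := by
      rw [Nat.Partition.partitionWithPartEquiv_apply_parts, Multiset.cons_erase μ.2]
    have hcount : ((a * μ.1.parts.count a : ℕ) : K) ≠ 0 :=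
      Nat.cast_ne_zero.2 (mul_ne_zero (by lia) (Multiset.count_ne_zero.2 μ.2))
    have hprod : (μ.1.parts.map p).prod = p a * ((remove μ).parts.map p).prod := by
      rw [hcons, Multiset.map_cons, Multiset.prod_cons]
    rw [zPart_of_parts_eq_cons hcons, hprod, Nat.cast_mul (a * _), ← mul_div_assoc,
      mul_div_mul_left _ _ hcount, mul_div_assoc]
  have hsupp (μ : Nat.Partition d)
      (hμ : (a * μ.parts.count a : ℕ) * ((μ.parts.map p).prod / (zPart μ : K)) ≠ 0) :
      a ∈ μ.parts := by
    by_contra hmem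
    simp [Multiset.count_eq_zero.2 hmem] at hμ
  rw [cycleIndex, Finset.mul_sum, ← Finset.sum_filter_of_ne fun μ _ => hsupp μ,
    Finset.sum_subtype (p := fun μ : Nat.Partition d => a ∈ μ.parts) _ (by simp)]
  exact Fintype.sum_equiv remove _ _ hterm

theorem natCast_mul_cycleIndex (p : ℕ → K) (d : ℕ) :
    (d : K) * cycleIndex p d = ∑ i ∈ range d, p (i + 1) * cycleIndex p (d - (i + 1)) := by
  calc (d : K) * cycleIndex p d
      = ∑ μ : Nat.Partition d, ∑ i ∈ range d,
          ((i + 1) * μ.parts.count (i + 1) : ℕ) * ((μ.parts.map p).prod / zPart μ) := by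
        rw [cycleIndex, Finset.mul_sum]
        refine Finset.sum_congr rfl fun μ _ => ?_
        rw [← Finset.sum_mul, ← Nat.cast_sum, sum_range_succ_mul_count_parts]
    _ = ∑ i ∈ range d, p (i + 1) * cycleIndex p (d - (i + 1)) := by
        rw [Finset.sum_comm]
        exact Finset.sum_congr rfl fun i hi =>
          sum_mul_count_mul_eq_mul_cycleIndex p (by lia) (mem_range.1 hi)

end CycleIndex

section GeneratingFunction

open PowerSeries

theorem derivation_prod_eq_sum_mul_prod {R A ι : Type*} [CommSemiring R] [CommSemiring A]
    [Algebra R A] (D : Derivation R A A) (s : Finset ι) {F G : ι → A}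
    (h : ∀ i ∈ s, D (F i) = G i * F i) : D (∏ i ∈ s, F i) = (∑ i ∈ s, G i) * ∏ i ∈ s, F i := by
  induction s using Finset.cons_induction with
  | empty => simp
  | cons i s hi ih =>
    rw [prod_cons, sum_cons, D.leibniz, h i (mem_cons_self i s),
      ih fun j hj => h j (mem_cons_of_mem hj), smul_eq_mul, smul_eq_mul]
    ring

variable {K : Type*} [Field K] [CharZero K]

theorem coeff_eq_cycleIndex_of_derivative_eq {p : ℕ → K} {F : K⟦X⟧} (h0 : coeff 0 F = 1)
    (hF : d⁄dX K F = PowerSeries.mk (fun k => p (k + 1)) * F) (d : ℕ) :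
    coeff d F = cycleIndex p d := by
  induction d using Nat.strong_induction_on with
  | _ d ih =>
    obtain _ | n := d
    · rw [h0, cycleIndex_zero]
    · have hrec : coeff (n + 1) F * (n + 1) = ∑ i ∈ range (n + 1), p (i + 1) * coeff (n - i) F := by
        rw [← coeff_derivative, hF, coeff_mul, Finset.Nat.sum_antidiagonal_eq_sum_range_succ_mk]
        simp only [coeff_mk]
      refine mul_right_cancel₀ (Nat.cast_add_one_ne_zero n) ?_
      rw [hrec, mul_comm, ← Nat.cast_succ, natCast_mul_cycleIndex]
      refine Finset.sum_congr rfl fun i _ => ?_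
      rw [ih _ (by lia), Nat.succ_sub_succ]

theorem coeff_prod_eq_cycleIndex {ι : Type*} (s : Finset ι) {p : ι → ℕ → K} {F : ι → K⟦X⟧}
    (h0 : ∀ i ∈ s, coeff 0 (F i) = 1)
    (hF : ∀ i ∈ s, d⁄dX K (F i) = PowerSeries.mk (fun k => p i (k + 1)) * F i) (d : ℕ) :
    coeff d (∏ i ∈ s, F i) = cycleIndex (fun k => ∑ i ∈ s, p i k) d := by
  refine coeff_eq_cycleIndex_of_derivative_eq ?_ ?_ d
  · simp only [coeff_zero_eq_constantCoeff, map_prod] at h0 ⊢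
    exact Finset.prod_eq_one h0
  · rw [derivation_prod_eq_sum_mul_prod (d⁄dX K) s hF]
    congr 1
    ext k
    simp only [map_sum, coeff_mk]

end GeneratingFunction

section Geometric

open PowerSeries

variable {R : Type*}

theorem powerSeriesMk_pow_eq_one_add [CommSemiring R] (x : R) :
    PowerSeries.mk (x ^ ·) = 1 + C x * X * PowerSeries.mk (x ^ ·) := by
  ext (_ | n)
  · simp
  · simp [mul_assoc, coeff_one, pow_succ']

theorem derivative_powerSeriesMk_pow [CommSemiring R] (x : R) :
    d⁄dX R (PowerSeries.mk (x ^ ·)) =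
      PowerSeries.mk (fun k => x ^ (k + 1)) * PowerSeries.mk (x ^ ·) := by
  ext n
  have hterm : ∀ ij ∈ antidiagonal n, x ^ (ij.1 + 1) * x ^ ij.2 = x ^ (n + 1) := fun ij hij => by
    rw [← pow_add, ← mem_antidiagonal.1 hij, add_right_comm]
  rw [coeff_derivative, coeff_mul]
  simp only [coeff_mk]
  rw [Finset.sum_congr rfl hterm, sum_const, Finset.Nat.card_antidiagonal, nsmul_eq_mul]
  push_cast
  ring

theorem derivative_one_add_C_mul_X [CommRing R] (x : R) :
    d⁄dX R (1 + C x * X) =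
      PowerSeries.mk (fun k => (-1) ^ (k + 1 + 1) * x ^ (k + 1)) * (1 + C x * X) := by
  have hgeom : PowerSeries.mk (fun k => (-1) ^ (k + 1 + 1) * x ^ (k + 1)) =
      C x * PowerSeries.mk ((-x) ^ ·) := by
    ext k
    simp only [coeff_mk, coeff_C_mul]
    rw [neg_pow x]
    ring
  have hmk := powerSeriesMk_pow_eq_one_add (-x)
  have hD : d⁄dX R (1 + C x * X) = C x := by simp
  rw [map_neg] at hmk
  rw [hD, hgeom]
  linear_combination -C x * hmk

end Geometric

section ChainSum

/-- The tuples `(m_1, …, m_d)` with entries in `{1, …, M}` such that `r m_i m_j` for `i < j`: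
strictly increasing tuples for `r = (· < ·)`, weakly increasing ones for `r = (· ≤ ·)`. -/
def chains (r : ℕ → ℕ → Prop) [DecidableRel r] (d M : ℕ) : Finset (Fin d → ℕ) :=
  (Fintype.piFinset fun _ : Fin d => Finset.Icc 1 M).filter
    fun m => ∀ i j : Fin d, i < j → r (m i) (m j)

/-- `∑ f(m_1) ⋯ f(m_d)` over `chains r d M`: the elementary (for `<`) or the complete homogeneous
(for `≤`) symmetric polynomial of degree `d` in `f 1, …, f M`. -/
def chainSum {R : Type*} [CommSemiring R] (r : ℕ → ℕ → Prop) [DecidableRel r] (f : ℕ → R)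
    (d M : ℕ) : R :=
  ∑ m ∈ chains r d M, ∏ j, f (m j)

variable {r : ℕ → ℕ → Prop} [DecidableRel r] {B : ℕ → ℕ}

theorem mem_chains {d M : ℕ} {m : Fin d → ℕ} :
    m ∈ chains r d M ↔ (∀ i, 1 ≤ m i ∧ m i ≤ M) ∧ ∀ i j, i < j → r (m i) (m j) := by
  simp only [chains, mem_filter, Fintype.mem_piFinset, mem_Icc]

theorem snoc_mem_chains_iff (hB : ∀ n, B n ≤ n) (hr : ∀ m n, 1 ≤ n → (r m n ↔ m ≤ B n))
    {d M n : ℕ} {m : Fin d → ℕ} :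
    (Fin.snoc m n : Fin (d + 1) → ℕ) ∈ chains r (d + 1) M ↔
      n ∈ Finset.Icc 1 M ∧ m ∈ chains r d (B n) := by
  simp only [mem_chains, Fin.forall_fin_succ', Fin.snoc_castSucc, Fin.snoc_last, mem_Icc,
    Fin.castSucc_lt_castSucc_iff, Fin.castSucc_lt_last, lt_irrefl, Fin.not_lt.2 (Fin.le_last _),
    false_imp_iff, true_imp_iff]
  have := hB n
  grind

variable {R : Type*} [CommSemiring R]

theorem chainSum_zero (f : ℕ → R) (M : ℕ) : chainSum r f 0 M = 1 := by
  simp [chainSum, chains]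

/-- Here the last entry `n` of a chain is split off: `B n` bounds the entries preceding it. -/
theorem chainSum_succ (hB : ∀ n, B n ≤ n)
    (hr : ∀ m n, 1 ≤ n → (r m n ↔ m ≤ B n)) (f : ℕ → R) (d M : ℕ) :
    chainSum r f (d + 1) M = ∑ n ∈ Finset.Icc 1 M, f n * chainSum r f d (B n) := by
  simp only [chainSum, Finset.mul_sum]
  rw [Finset.sum_sigma']
  refine Finset.sum_nbij' (fun m => ⟨m (Fin.last d), Fin.init m⟩) (fun x => Fin.snoc x.2 x.1)
    (fun m hm => ?_) (fun x hx => ?_) (fun m _ => Fin.snoc_init_self m) (fun x _ => by simp)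
    (fun m _ => ?_)
  · rwa [mem_sigma, ← snoc_mem_chains_iff hB hr, Fin.snoc_init_self]
  · rwa [mem_sigma, ← snoc_mem_chains_iff hB hr] at hx
  · rw [Fin.prod_univ_castSucc, mul_comm]
    rfl

open PowerSeries

theorem powerSeriesMk_chainSum_zero_right (f : ℕ → R) : PowerSeries.mk (chainSum r f · 0) = 1 := by
  ext (_ | d)
  · simp [chainSum_zero]
  · simp [chainSum, chains, coeff_one]

theorem powerSeriesMk_chainSum_succ_right (hB : ∀ n, B n ≤ n)
    (hr : ∀ m n, 1 ≤ n → (r m n ↔ m ≤ B n)) (f : ℕ → R) (M : ℕ) :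
    PowerSeries.mk (chainSum r f · (M + 1)) =
      PowerSeries.mk (chainSum r f · M) +
        C (f (M + 1)) * X * PowerSeries.mk (chainSum r f · (B (M + 1))) := by
  ext (_ | d)
  · simp [chainSum_zero]
  · simp [mul_assoc, chainSum_succ hB hr, Finset.sum_Icc_succ_top]

theorem powerSeriesMk_chainSum_lt (f : ℕ → R) (M : ℕ) :
    PowerSeries.mk (chainSum (· < ·) f · M) = ∏ m ∈ Finset.Icc 1 M, (1 + C (f m) * X) := by
  induction M with
  | zero => simpa using powerSeriesMk_chainSum_zero_right f
  | succ M ih =>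
    rw [Finset.prod_Icc_succ_top (by lia), ← ih,
      powerSeriesMk_chainSum_succ_right (B := (· - 1)) (fun _ => Nat.sub_le _ _) (by lia),
      Nat.add_sub_cancel]
    ring

theorem powerSeriesMk_chainSum_le {R : Type*} [CommRing R] (f : ℕ → R) (M : ℕ) :
    PowerSeries.mk (chainSum (· ≤ ·) f · M) = ∏ m ∈ Finset.Icc 1 M, PowerSeries.mk (f m ^ ·) := by
  induction M with
  | zero => simpa using powerSeriesMk_chainSum_zero_right f
  | succ M ih =>
    rw [Finset.prod_Icc_succ_top (by lia), ← ih]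
    have hchain := powerSeriesMk_chainSum_succ_right (r := (· ≤ ·)) (B := id) (fun _ => le_rfl)
      (fun _ _ _ => Iff.rfl) f M
    have hgeom := powerSeriesMk_pow_eq_one_add (f (M + 1))
    simp only [id] at hchain
    linear_combination PowerSeries.mk (f (M + 1) ^ ·) * hchain -
      PowerSeries.mk (chainSum (· ≤ ·) f · (M + 1)) * hgeom

variable {K : Type*} [Field K] [CharZero K]

theorem chainSum_lt_eq_cycleIndex (f : ℕ → K) (d M : ℕ) :
    chainSum (· < ·) f d M =
      cycleIndex (fun k => (-1) ^ (k + 1) * ∑ m ∈ Finset.Icc 1 M, f m ^ k) d := by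
  simp only [Finset.mul_sum]
  rw [← coeff_prod_eq_cycleIndex _ (fun m _ => by simp)
    (fun m _ => derivative_one_add_C_mul_X (f m)), ← powerSeriesMk_chainSum_lt, coeff_mk]

theorem chainSum_le_eq_cycleIndex (f : ℕ → K) (d M : ℕ) :
    chainSum (· ≤ ·) f d M = cycleIndex (fun k => ∑ m ∈ Finset.Icc 1 M, f m ^ k) d := by
  rw [← coeff_prod_eq_cycleIndex _ (fun m _ => by simp)
    (fun m _ => derivative_powerSeriesMk_pow (f m)), ← powerSeriesMk_chainSum_le, coeff_mk]

variable [TopologicalSpace K] [IsTopologicalSemiring K] {f P : ℕ → K}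

theorem tendsto_chainSum_lt
    (h : ∀ k, 0 < k → Tendsto (fun M => ∑ m ∈ Finset.Icc 1 M, f m ^ k) atTop (𝓝 (P k))) (d : ℕ) :
    Tendsto (chainSum (· < ·) f d) atTop (𝓝 (cycleIndex (fun k => (-1) ^ (k + 1) * P k) d)) :=
  (tendsto_cycleIndex (fun k hk => (h k hk).const_mul _) d).congr fun M =>
    (chainSum_lt_eq_cycleIndex f d M).symm

theorem tendsto_chainSum_le
    (h : ∀ k, 0 < k → Tendsto (fun M => ∑ m ∈ Finset.Icc 1 M, f m ^ k) atTop (𝓝 (P k))) (d : ℕ) :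
    Tendsto (chainSum (· ≤ ·) f d) atTop (𝓝 (cycleIndex P d)) :=
  (tendsto_cycleIndex h d).congr fun M => (chainSum_le_eq_cycleIndex f d M).symm

end ChainSum

section QWeight

/-- The `q`-analogue `[m]_q = (1 - q ^ m) / (1 - q)` of the natural number `m`. -/
def qNat (q : ℝ) (m : ℕ) : ℝ := (1 - q ^ m) / (1 - q)

/-- The weight `q ^ (m (s - 1)) / [m]_q ^ s` of `χ m` in the series of `L_q(s; χ)`. -/
def qWeight (q : ℝ) (s : ℂ) (m : ℕ) : ℂ :=
  (q : ℂ) ^ ((m : ℂ) * (s - 1)) / (qNat q m : ℂ) ^ s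

variable {q : ℝ} {m : ℕ}

theorem one_le_qNat (hq0 : 0 ≤ q) (hq1 : q < 1) (hm : m ≠ 0) : 1 ≤ qNat q m := by
  rw [qNat, one_le_div (sub_pos.2 hq1)]
  exact sub_le_sub_left (pow_le_of_le_one hq0 hq1.le hm) 1

theorem norm_qWeight_le (hq0 : 0 < q) (hq1 : q < 1) {s : ℂ} (hs : 0 ≤ s.re) (hm : m ≠ 0) :
    ‖qWeight q s m‖ ≤ (q ^ (s.re - 1)) ^ m := by
  have hqNat : 1 ≤ qNat q m := one_le_qNat hq0.le hq1 hm
  have hexp : q ^ ((m : ℂ) * (s - 1)).re = (q ^ (s.re - 1)) ^ m := by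
    rw [← Real.rpow_natCast, ← Real.rpow_mul hq0.le]
    simp [mul_comm]
  rw [qWeight, norm_div, norm_cpow_eq_rpow_re_of_pos hq0,
    norm_cpow_eq_rpow_re_of_pos (one_pos.trans_le hqNat), hexp]
  exact div_le_self (by positivity) (Real.one_le_rpow hqNat hs)

theorem qWeight_sub_natCast (hq0 : q ≠ 0) (hm : qNat q m ≠ 0) (s : ℂ) (l : ℕ) :
    qWeight q (s - l) m = qWeight q s m * (qNat q m / (q : ℂ) ^ m) ^ l := by
  have hq : (q : ℂ) ≠ 0 := ofReal_ne_zero.2 hq0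
  have hexp : (m : ℂ) * (s - l - 1) = m * (s - 1) - (m * l : ℕ) := by push_cast; ring
  rw [qWeight, qWeight, hexp, cpow_sub _ _ hq, cpow_sub _ _ (ofReal_ne_zero.2 hm), cpow_natCast,
    cpow_natCast, div_pow, pow_mul, div_div_div_eq, div_mul_div_comm, mul_comm (_ ^ s)]

theorem qWeight_pow_succ (hq0 : q ≠ 0) (s : ℂ) (m n : ℕ) :
    qWeight q s m ^ (n + 1) = qWeight q ((n + 1 : ℕ) * s) m * (((q : ℂ) ^ m)⁻¹) ^ n := by
  have hexp : ((n + 1 : ℕ) : ℂ) * (m * (s - 1)) = m * ((n + 1 : ℕ) * s - 1) - (m * n : ℕ) := by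
    push_cast; ring
  rw [qWeight, qWeight, div_pow, ← cpow_nat_mul, ← cpow_nat_mul, hexp,
    cpow_sub _ _ (ofReal_ne_zero.2 hq0), cpow_natCast, pow_mul, inv_pow]
  ring

/-- The binomial expansion of `q ^ (-m (k - 1)) = (1 + (1 - q) [m]_q q ^ (-m)) ^ (k - 1)`. -/
theorem sum_choose_mul_qWeight (hq0 : 0 < q) (hq1 : q < 1) (s : ℂ) (hm : m ≠ 0) {k : ℕ}
    (hk : k ≠ 0) :
    ∑ l ∈ range k, ((k - 1).choose l : ℂ) * (1 - (q : ℂ)) ^ l * qWeight q (k * s - l) m =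
      qWeight q s m ^ k := by
  obtain ⟨n, rfl⟩ := Nat.exists_eq_succ_of_ne_zero hk
  have hqNat : qNat q m ≠ 0 := (one_pos.trans_le (one_le_qNat hq0.le hq1 hm)).ne'
  have hinv : ((q : ℂ) ^ m)⁻¹ = (1 - q) * (qNat q m / (q : ℂ) ^ m) + 1 := by
    have hq : (q : ℂ) ≠ 0 := ofReal_ne_zero.2 hq0.ne'
    have hsub : (1 : ℂ) - q ≠ 0 := sub_ne_zero.2 (by exact_mod_cast hq1.ne')
    rw [qNat]
    push_cast
    field_simp
    ring
  rw [Nat.succ_eq_add_one, qWeight_pow_succ hq0.ne', hinv, add_pow, Finset.mul_sum]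
  refine Finset.sum_congr rfl fun l _ => ?_
  rw [qWeight_sub_natCast hq0.ne' hqNat, Nat.add_sub_cancel, one_pow, mul_pow]
  ring

end QWeight

section QLFunction

variable {N : ℕ} (χ : DirichletCharacter ℂ N) {q : ℝ} {s : ℂ}

/-- `∑_{l < k} C(k - 1, l) (1 - q) ^ l L_q(k s - l; χ ^ k)`, the value of the `k`-th power sum of
the terms of `L_q(s; χ)`. -/
def qLPowerSum (q : ℝ) (s : ℂ) (k : ℕ) : ℂ :=
  ∑ l ∈ range k, ((k - 1).choose l : ℂ) * (1 - (q : ℂ)) ^ l * qLFun (χ ^ k) q (k * s - l)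

theorem hasSum_qLFun (hq0 : 0 < q) (hq1 : q < 1) (hs : 1 < s.re) :
    HasSum (fun m : ℕ => χ (m + 1 : ℕ) * qWeight q s (m + 1)) (qLFun χ q s) := by
  have hr : q ^ (s.re - 1) < 1 := Real.rpow_lt_one hq0.le hq1 (sub_pos.2 hs)
  have hgeom := summable_geometric_of_lt_one (Real.rpow_nonneg hq0.le _) hr
  have hsummable : Summable fun m : ℕ => χ (m + 1 : ℕ) * qWeight q s (m + 1) := by
    refine .of_norm_bounded ((summable_nat_add_iff 1).2 hgeom) fun m => ?_
    rw [norm_mul]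
    exact (mul_le_of_le_one_left (norm_nonneg _) (χ.norm_le_one _)).trans
      (norm_qWeight_le hq0 hq1 (by linarith) m.succ_ne_zero)
  have hterm (m : ℕ) : (if m + 1 = 0 then 0 else χ (m + 1 : ℕ) *
      (q : ℂ) ^ (((m + 1 : ℕ) : ℂ) * (s - 1)) / (((1 - q ^ (m + 1)) / (1 - q) : ℝ) : ℂ) ^ s) =
      χ (m + 1 : ℕ) * qWeight q s (m + 1) := by
    rw [if_neg m.succ_ne_zero, mul_div_assoc, qWeight, qNat]
  rw [qLFun, tsum_eq_zero_add' (by simpa only [hterm] using hsummable)]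
  simpa only [hterm, if_pos, zero_add] using hsummable.hasSum

theorem hasSum_qLPowerSum (hq0 : 0 < q) (hq1 : q < 1) (hs : 1 < s.re) {k : ℕ} (hk : k ≠ 0) :
    HasSum (fun m : ℕ => (χ (m + 1 : ℕ) * qWeight q s (m + 1)) ^ k) (qLPowerSum χ q s k) := by
  have hre (l : ℕ) (hl : l ∈ range k) : 1 < (k * s - l : ℂ).re := by
    have hlk : (l : ℝ) + 1 ≤ k := by exact_mod_cast mem_range.1 hl
    have hk0 : (0 : ℝ) < k := by exact_mod_cast hk.pos
    have hks : (k : ℝ) < k * s.re := lt_mul_of_one_lt_right hk0 hs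
    rw [sub_re, natCast_re, ← ofReal_natCast, re_ofReal_mul]
    linarith
  have hterm (m : ℕ) : ∑ l ∈ range k, ((k - 1).choose l : ℂ) * (1 - (q : ℂ)) ^ l *
      ((χ ^ k) (m + 1 : ℕ) * qWeight q (k * s - l) (m + 1)) =
        (χ (m + 1 : ℕ) * qWeight q s (m + 1)) ^ k := by
    rw [MulChar.pow_apply' χ hk, mul_pow, ← sum_choose_mul_qWeight hq0 hq1 s m.succ_ne_zero hk,
      Finset.mul_sum]
    exact Finset.sum_congr rfl fun l _ => mul_left_comm _ _ _
  simpa only [hterm, qLPowerSum] using hasSum_sum fun l hl =>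
    (hasSum_qLFun (χ ^ k) hq0 hq1 (hre l hl)).mul_left (((k - 1).choose l : ℂ) * (1 - (q : ℂ)) ^ l)

theorem tendsto_sum_Icc_mul_qWeight_pow (hq0 : 0 < q) (hq1 : q < 1) (hs : 1 < s.re) {k : ℕ}
    (hk : k ≠ 0) :
    Tendsto (fun M : ℕ => ∑ m ∈ Finset.Icc 1 M, (χ m * qWeight q s m) ^ k) atTop
      (𝓝 (qLPowerSum χ q s k)) := by
  refine (hasSum_qLPowerSum χ hq0 hq1 hs hk).tendsto_sum_nat.congr fun M => ?_
  rw [range_eq_Ico, Finset.sum_Ico_add' (fun m : ℕ => (χ m * qWeight q s m) ^ k) 0 M 1, zero_add]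
  rfl

variable (q s) (d : ℕ)

theorem qMultLSumLt_eq_chainSum :
    qMultLSumLt χ d q s = chainSum (· < ·) (fun m => χ m * qWeight q s m) d := by
  funext M
  simp only [qMultLSumLt, mul_div_assoc]
  rfl

theorem qMultLSumLe_eq_chainSum :
    qMultLSumLe χ d q s = chainSum (· ≤ ·) (fun m => χ m * qWeight q s m) d := by
  funext M
  simp only [qMultLSumLe, mul_div_assoc]
  rfl

theorem qEvalSum_true_eq_cycleIndex :
    qEvalSum χ d q s true = cycleIndex (fun k => (-1) ^ (k + 1) * qLPowerSum χ q s k) d := by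
  rw [cycleIndex_neg_one_pow_mul]
  rfl

theorem qEvalSum_false_eq_cycleIndex :
    qEvalSum χ d q s false = cycleIndex (qLPowerSum χ q s) d := by
  refine Finset.sum_congr rfl fun μ _ => ?_
  rw [if_neg Bool.false_ne_true, one_div_mul_eq_div]
  rfl

end QLFunction

/-- **Proposition 2.8**: for `0 < q < 1`, a Dirichlet character `χ`, `d ≥ 1` and
`Re(s) > 1`,
`L^ω_{q,d}({s}^d;{χ}^d) = Σ_{μ ⊢ d} (ε^ω_μ/z_μ)
  ∏_{j=1}^{ℓ(μ)} Σ_{l_j=0}^{μ_j-1} C(μ_j-1, l_j) (1-q)^{l_j} L_q(μ_j s - l_j; χ^{μ_j})`,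
the multiple `q`-`L`-value being expressed as the limit of its truncations. -/
theorem multiple_q_L_value_eval
    (N : ℕ) [NeZero N] (χ : DirichletCharacter ℂ N) (d : ℕ) (hd : 1 ≤ d)
    (q : ℝ) (hq0 : 0 < q) (hq1 : q < 1) (s : ℂ) (hs : 1 < s.re) :
    Tendsto (qMultLSumLt χ d q s) atTop (𝓝 (qEvalSum χ d q s true)) ∧
    Tendsto (qMultLSumLe χ d q s) atTop (𝓝 (qEvalSum χ d q s false)) := by
  have hpow (k : ℕ) (hk : 0 < k) := tendsto_sum_Icc_mul_qWeight_pow χ hq0 hq1 hs hk.ne'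
  constructor
  · rw [qMultLSumLt_eq_chainSum, qEvalSum_true_eq_cycleIndex]
    exact tendsto_chainSum_lt hpow d
  · rw [qMultLSumLe_eq_chainSum, qEvalSum_false_eq_cycleIndex]
    exact tendsto_chainSum_le hpow d

end
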